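/- arXiv:2503.20716 — 2 statements merged into one kernel-verified Lean document; each statement's English description precedes it below -/
import Mathlib

section
/- Let E be a real normed vector space, N ≥ 1 an integer, and ρ, σ, γ > 0 constants with (ρ+1)γ/σ < 1. Let y^k ∈ E, λᵢ^k ∈ E (i = 1,…,N) and xᵢ^k ∈ E be sequences indexed by k ≥ 1, and y*, λᵢ* ∈ E fixed. Assume that for every k ≥ 1: (i) Σᵢ ‖xᵢ^{k+1} − y*‖ ≤ (1/σ) Σᵢ (ρ‖y^k − y*‖ + ‖λᵢ^k − λᵢ*‖); (ii) N·‖y^{k+1} − y*‖ ≤ γ Σᵢ ‖xᵢ^{k+1} − y*‖; (iii) Σᵢ ‖λᵢ^{k+1} − λᵢ*‖ ≤ γ Σᵢ ‖xᵢ^{k+1} − y*‖. Then for every k ≥ 1, (ρN/σ)‖y^k − y*‖ + (1/σ) Σᵢ ‖λᵢ^k − λᵢ*‖ ≤ ((ρ+1)γ/σ)^{k−1} · [ (ρN/σ)‖y¹ − y*‖ + (1/σ) Σᵢ ‖λᵢ¹ − λᵢ*‖ ], i.e. the quantity (ρN/σ)‖y^k − y*‖ + (1/σ)Σᵢ‖λᵢ^k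 − λᵢ*‖ converges linearly to 0 with rate (ρ+1)γ/σ. -/
open Finset

/-!
Weight the primal and dual errors so that their sum `V k` is exactly the upper bound that the
subproblems give for `∑ i, ‖x (k + 1) i - y*‖`. The SQP-type bounds control both errors at step
`k + 1` by `γ` times that sum, hence `V (k + 1) ≤ ((ρ + 1) * γ / σ) * V k`.
-/

section PrimalDualError

variable {ι E F : Type*} [Fintype ι] [SeminormedAddCommGroup E] [SeminormedAddCommGroup F]

/-- The weighted distance of a primal iterate `y` and local dual iterates `lam` from a KKT point
`(ystar, lamstar)`, serving as Lyapunov function of the iteration. It is written as the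
subproblem bound of the paper's Assumption (12); `primalDualError_eq` separates the two errors. -/
noncomputable def primalDualError (ρ σ : ℝ) (ystar : E) (lamstar : ι → F) (y : E)
    (lam : ι → F) : ℝ :=
  (1 / σ) * ∑ i, (ρ * ‖y - ystar‖ + ‖lam i - lamstar i‖)

theorem primalDualError_eq (ρ σ : ℝ) (ystar : E) (lamstar : ι → F) (y : E) (lam : ι → F) :
    primalDualError ρ σ ystar lamstar y lam =
      (ρ * Fintype.card ι / σ) * ‖y - ystar‖ + (1 / σ) * ∑ i, ‖lam i - lamstar i‖ := by
  rw [primalDualError, sum_add_distrib, sum_const, card_univ, nsmul_eq_mul]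
  ring

theorem primalDualError_le_mul {ρ σ γ s : ℝ} (hρ : 0 ≤ ρ) (hσ : 0 < σ) (hγ : 0 ≤ γ)
    {ystar y y' : E} {lamstar lam lam' : ι → F}
    (hs : s ≤ primalDualError ρ σ ystar lamstar y lam)
    (hy' : Fintype.card ι * ‖y' - ystar‖ ≤ γ * s)
    (hlam' : ∑ i, ‖lam' i - lamstar i‖ ≤ γ * s) :
    primalDualError ρ σ ystar lamstar y' lam' ≤
      ((ρ + 1) * γ / σ) * primalDualError ρ σ ystar lamstar y lam :=
  calc primalDualError ρ σ ystar lamstar y' lam'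
      = (ρ / σ) * (Fintype.card ι * ‖y' - ystar‖) +
          (1 / σ) * ∑ i, ‖lam' i - lamstar i‖ := by
        rw [primalDualError_eq]
        ring
    _ ≤ (ρ / σ) * (γ * s) + (1 / σ) * (γ * s) := by gcongr
    _ = ((ρ + 1) * γ / σ) * s := by ring
    _ ≤ ((ρ + 1) * γ / σ) * primalDualError ρ σ ystar lamstar y lam := by gcongr

theorem fc_aladin_local_linear_convergence_general {ρ σ γ : ℝ} (hρ : 0 ≤ ρ) (hσ : 0 < σ)
    (hγ : 0 ≤ γ) (y : ℕ → E) (lam : ℕ → ι → F) (x : ℕ → ι → E) (ystar : E) (lamstar : ι → F)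
    (h1 : ∀ k, 1 ≤ k → ∑ i, ‖x (k + 1) i - ystar‖ ≤
      (1 / σ) * ∑ i, (ρ * ‖y k - ystar‖ + ‖lam k i - lamstar i‖))
    (h2 : ∀ k, 1 ≤ k → Fintype.card ι * ‖y (k + 1) - ystar‖ ≤
      γ * ∑ i, ‖x (k + 1) i - ystar‖)
    (h3 : ∀ k, 1 ≤ k → ∑ i, ‖lam (k + 1) i - lamstar i‖ ≤
      γ * ∑ i, ‖x (k + 1) i - ystar‖)
    (k : ℕ) (hk : 1 ≤ k) :
    (ρ * Fintype.card ι / σ) * ‖y k - ystar‖ + (1 / σ) * ∑ i, ‖lam k i - lamstar i‖ ≤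
      ((ρ + 1) * γ / σ) ^ (k - 1) *
        ((ρ * Fintype.card ι / σ) * ‖y 1 - ystar‖ +
          (1 / σ) * ∑ i, ‖lam 1 i - lamstar i‖) := by
  obtain ⟨n, rfl⟩ := Nat.exists_eq_add_of_le' hk
  let V (j : ℕ) : ℝ := primalDualError ρ σ ystar lamstar (y (j + 1)) (lam (j + 1))
  have V_succ_le (j : ℕ) : V (j + 1) ≤ ((ρ + 1) * γ / σ) * V j :=
    primalDualError_le_mul hρ hσ hγ (h1 _ j.succ_pos) (h2 _ j.succ_pos) (h3 _ j.succ_pos)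
  have V_le : V n ≤ ((ρ + 1) * γ / σ) ^ n * V 0 :=
    le_geom (by positivity) n fun j _ => V_succ_le j
  simpa only [V, primalDualError_eq, zero_add, Nat.add_sub_cancel] using V_le

end PrimalDualError

/-- Theorem 2 of the paper: local linear convergence of FC-ALADIN for smooth,
possibly non-convex consensus problems, with rate `(ρ+1)γ/σ < 1`. -/
theorem fc_aladin_local_linear_convergence {E : Type*} [NormedAddCommGroup E]
    [NormedSpace ℝ E] (N : ℕ) (hN : 1 ≤ N) (ρ σ γ : ℝ)
    (hρ : 0 < ρ) (hσ : 0 < σ) (hγ : 0 < γ) (hrate : (ρ + 1) * γ / σ < 1)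
    (y : ℕ → E) (lam x : ℕ → Fin N → E) (ystar : E) (lamstar : Fin N → E)
    (h1 : ∀ k, 1 ≤ k → ∑ i, ‖x (k + 1) i - ystar‖ ≤
        (1 / σ) * ∑ i, (ρ * ‖y k - ystar‖ + ‖lam k i - lamstar i‖))
    (h2 : ∀ k, 1 ≤ k → (N : ℝ) * ‖y (k + 1) - ystar‖ ≤
        γ * ∑ i, ‖x (k + 1) i - ystar‖)
    (h3 : ∀ k, 1 ≤ k → ∑ i, ‖lam (k + 1) i - lamstar i‖ ≤
        γ * ∑ i, ‖x (k + 1) i - ystar‖) :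
    ∀ k, 1 ≤ k →
      (ρ * N / σ) * ‖y k - ystar‖ + (1 / σ) * ∑ i, ‖lam k i - lamstar i‖ ≤
        ((ρ + 1) * γ / σ) ^ (k - 1) *
          ((ρ * N / σ) * ‖y 1 - ystar‖ + (1 / σ) * ∑ i, ‖lam 1 i - lamstar i‖) := by
  simpa only [Fintype.card_fin] using
    fc_aladin_local_linear_convergence_general hρ.le hσ hγ.le y lam x ystar lamstar h1
      (by simpa only [Fintype.card_fin] using h2) h3
end

section
/- Let E be a real inner product space, N ≥ 1, and f₁,…,f_N : E → ℝ. Let y* ∈ E, G > 0, p ∈ (0,1], and K ≥ 2. Let y^k ∈ E (k = 1,…,K+1) and xᵢ^k ∈ E (i = 1,…,N) be sequences, and for each k let Ψ_min^k > 0 and Ψ_max^k > 0 be scalars. Define D_k = Σᵢ ( fᵢ(y^k) + fᵢ(xᵢ^{k+1}) ) − 2 Σᵢ fᵢ(y*) and assume D_k ≥ 0 for 1 ≤ k ≤ K. Assume that for every k with 2 ≤ k ≤ K the per-iteration descent inequality holds: 2Ψ_min^k·( p·D_k + (1−p)·D_{k−1} ) ≤ p·‖y^k − y*‖² + (1−p)·‖y^{k−1}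 − y*‖² − ‖y^{k+1} − y*‖² + 4(Ψ_max^k)²G² + 2Ψ_max^k·G·( p·Σᵢ‖y^k − xᵢ^{k+1}‖ + (1−p)·Σᵢ‖y^{k−1} − xᵢ^{k}‖ ). Then min_{1 ≤ k ≤ K} D_k ≤ [ (1−p)‖y¹ − y*‖² + ‖y² − y*‖² + Σ_{k=2}^{K} ( 4(Ψ_max^k)²G² + 2Ψ_max^k·G·( p·Σᵢ‖y^k − xᵢ^{k+1}‖ + (1−p)·Σᵢ‖y^{k−1} − xᵢ^{k}‖ ) ) ] / ( 2 Σ_{k=2}^{K} Ψ_min^k ). -/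
open Finset

/-!
The descent inequality couples two consecutive iterates, because an agent that is not polled at
iteration `k` still reports its data from iteration `k - 1`. With `a k = ‖y k - ystar‖ ^ 2` its
distance terms are nevertheless a difference `V k - V (k + 1)` for the potential
`V k = (1 - p) * a (k - 1) + a k`. Summing leaves only `V 2` and the errors, while every convex
combination of consecutive gaps is at least the smallest gap.
-/

section PollingMean

/-- The expected value of `u` at the last report of an agent that is polled with probability `p`
at iteration `k` and otherwise keeps its report from iteration `k - 1`. The index `k - 1` is
truncated, so only `1 ≤ k` is meaningful. -/
def pollingMean {R : Type*} [Ring R] (p : R) (u : ℕ → R) (k : ℕ) : R :=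
  p * u k + (1 - p) * u (k - 1)

/-- The potential that decreases along the descent inequality when `u` is the squared distance of
the iterates to the optimizer: it weights the older iterate by the probability `1 - p` of not being
polled. The index `k - 1` is truncated, so only `1 ≤ k` is meaningful. -/
def pollingPotential {R : Type*} [Ring R] (p : R) (u : ℕ → R) (k : ℕ) : R :=
  (1 - p) * u (k - 1) + u k

theorem pollingMean_sub_succ {R : Type*} [Ring R] (p : R) (u : ℕ → R) (k : ℕ) :
    pollingMean p u k - u (k + 1) = pollingPotential p u k - pollingPotential p u (k + 1) := by
  simp only [pollingMean, pollingPotential, Nat.add_sub_cancel]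
  noncomm_ring

variable {R : Type*} [Ring R] [LinearOrder R] [IsStrictOrderedRing R] {p : R} {u : ℕ → R}

theorem le_pollingMean {c : R} {k : ℕ} (hp0 : 0 ≤ p) (hp1 : p ≤ 1) (hk : c ≤ u k)
    (hk' : c ≤ u (k - 1)) : c ≤ pollingMean p u k :=
  convex_Ici c hk hk' hp0 (sub_nonneg.mpr hp1) (add_sub_cancel p 1)

theorem inf'_le_pollingMean {m n k : ℕ} (hp0 : 0 ≤ p) (hp1 : p ≤ 1) (hmn : (Icc m n).Nonempty)
    (hk : k ∈ Icc (m + 1) n) : (Icc m n).inf' hmn u ≤ pollingMean p u k := by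
  rw [mem_Icc] at hk
  exact le_pollingMean hp0 hp1 (inf'_le u (mem_Icc.mpr (by lia))) (inf'_le u (mem_Icc.mpr (by lia)))

theorem pollingPotential_nonneg (hp1 : p ≤ 1) (hu : ∀ k, 0 ≤ u k) (k : ℕ) :
    0 ≤ pollingPotential p u k :=
  add_nonneg (mul_nonneg (sub_nonneg.mpr hp1) (hu (k - 1))) (hu k)

end PollingMean

theorem le_div_sum_of_potential_descent {𝕜 : Type*} [Field 𝕜] [LinearOrder 𝕜]
    [IsStrictOrderedRing 𝕜] {m n : ℕ} {w V ε : ℕ → 𝕜} {c : 𝕜} (hmn : m ≤ n)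
    (hw : 0 < ∑ k ∈ Icc m n, w k) (hV : 0 ≤ V (n + 1))
    (hdescent : ∀ k ∈ Icc m n, w k * c ≤ V k - V (k + 1) + ε k) :
    c ≤ (V m + ∑ k ∈ Icc m n, ε k) / ∑ k ∈ Icc m n, w k := by
  rw [le_div_iff₀' hw]
  calc (∑ k ∈ Icc m n, w k) * c
      = ∑ k ∈ Icc m n, w k * c := sum_mul ..
    _ ≤ ∑ k ∈ Icc m n, (-(V (k + 1) - V k) + ε k) :=
        sum_le_sum fun k hk => (hdescent k hk).trans_eq (by rw [neg_sub])
    _ = V m - V (n + 1) + ∑ k ∈ Icc m n, ε k := by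
        rw [sum_add_distrib, sum_neg_distrib, sum_Icc_sub hmn, neg_sub]
    _ ≤ V m + ∑ k ∈ Icc m n, ε k := by gcongr; exact sub_le_self _ hV

/-- The objective gap `D_k` of the paper. It adds the gap at the global iterate `y k` to the gap at
the local iterates `x (k + 1)`, which are computed from `y k`; hence the factor `2`. -/
def objectiveGap {E ι : Type*} [Fintype ι] (f : ι → E → ℝ) (ystar : E) (y : ℕ → E)
    (x : ℕ → ι → E) (k : ℕ) : ℝ :=
  ∑ i, (f i (y k) + f i (x (k + 1) i)) - 2 * ∑ i, f i ystar

/-- The error terms of the descent inequality (38)–(39): the squared subgradient step and the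
expected mismatch between global and local iterates. -/
noncomputable def descentError {E ι : Type*} [SeminormedAddCommGroup E] [Fintype ι] (p G : ℝ)
    (Ψmax : ℕ → ℝ) (y : ℕ → E) (x : ℕ → ι → E) (k : ℕ) : ℝ :=
  4 * Ψmax k ^ 2 * G ^ 2 + 2 * Ψmax k * G *
    (p * ∑ i, ‖y k - x (k + 1) i‖ + (1 - p) * ∑ i, ‖y (k - 1) - x k i‖)

theorem inexact_fc_aladin_convergence_general {E ι : Type*} [SeminormedAddCommGroup E] [Fintype ι]
    {f : ι → E → ℝ} {ystar : E} {G p : ℝ} (hp0 : 0 ≤ p) (hp1 : p ≤ 1) {K : ℕ} (hK : 2 ≤ K)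
    {y : ℕ → E} {x : ℕ → ι → E} {Ψmin Ψmax : ℕ → ℝ} (hΨmin : ∀ k, 2 ≤ k → k ≤ K → 0 < Ψmin k)
    (hrec : ∀ k, 2 ≤ k → k ≤ K →
      2 * Ψmin k * pollingMean p (objectiveGap f ystar y x) k ≤
        pollingMean p (fun j => ‖y j - ystar‖ ^ 2) k - ‖y (k + 1) - ystar‖ ^ 2 +
          descentError p G Ψmax y x k) :
    (Icc 1 K).inf' (nonempty_Icc.mpr (by lia)) (objectiveGap f ystar y x) ≤
      ((1 - p) * ‖y 1 - ystar‖ ^ 2 + ‖y 2 - ystar‖ ^ 2 +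
          ∑ k ∈ Icc 2 K, descentError p G Ψmax y x k) / (2 * ∑ k ∈ Icc 2 K, Ψmin k) := by
  have hweight : ∀ k ∈ Icc 2 K, 0 < 2 * Ψmin k := fun k hk =>
    mul_pos two_pos (hΨmin k (mem_Icc.mp hk).1 (mem_Icc.mp hk).2)
  rw [mul_sum]
  refine le_div_sum_of_potential_descent (V := pollingPotential p fun j => ‖y j - ystar‖ ^ 2) hK
    (sum_pos hweight (nonempty_Icc.mpr hK))
    (pollingPotential_nonneg hp1 (fun _ => sq_nonneg _) _) fun k hk => ?_
  rw [← pollingMean_sub_succ]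
  exact (mul_le_mul_of_nonneg_left (inf'_le_pollingMean hp0 hp1 _ hk) (hweight k hk).le).trans
    (hrec k (mem_Icc.mp hk).1 (mem_Icc.mp hk).2)

/-- Quantitative form of Theorem 3 of the paper: conditional on the per-iteration
descent inequality (38)–(39) of Inexact FC-ALADIN, the best objective gap over the
first `K` iterations is bounded by the telescoped error terms divided by
`2 Σ_{k=2}^K Ψ_min^k`. -/
theorem inexact_fc_aladin_convergence {E : Type*} [NormedAddCommGroup E]
    [InnerProductSpace ℝ E] (N : ℕ) (hN : 1 ≤ N) (f : Fin N → E → ℝ)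
    (ystar : E) (G : ℝ) (hG : 0 < G) (p : ℝ) (hp0 : 0 < p) (hp1 : p ≤ 1)
    (K : ℕ) (hK : 2 ≤ K) (y : ℕ → E) (x : ℕ → Fin N → E)
    (Ψmin Ψmax : ℕ → ℝ)
    (hΨmin : ∀ k, 1 ≤ k → k ≤ K → 0 < Ψmin k)
    (hΨmax : ∀ k, 1 ≤ k → k ≤ K → 0 < Ψmax k)
    (D : ℕ → ℝ)
    (hD : ∀ k, D k = ∑ i, (f i (y k) + f i (x (k + 1) i)) - 2 * ∑ i, f i ystar)
    (hDnn : ∀ k, 1 ≤ k → k ≤ K → 0 ≤ D k)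
    (hrec : ∀ k, 2 ≤ k → k ≤ K →
      2 * Ψmin k * (p * D k + (1 - p) * D (k - 1)) ≤
        p * ‖y k - ystar‖ ^ 2 + (1 - p) * ‖y (k - 1) - ystar‖ ^ 2 -
          ‖y (k + 1) - ystar‖ ^ 2 + 4 * Ψmax k ^ 2 * G ^ 2 +
          2 * Ψmax k * G * (p * ∑ i, ‖y k - x (k + 1) i‖ +
            (1 - p) * ∑ i, ‖y (k - 1) - x k i‖)) :
    (Finset.Icc 1 K).inf' (Finset.nonempty_Icc.mpr (by omega)) D ≤
      ((1 - p) * ‖y 1 - ystar‖ ^ 2 + ‖y 2 - ystar‖ ^ 2 +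
          ∑ k ∈ Finset.Icc 2 K, (4 * Ψmax k ^ 2 * G ^ 2 +
            2 * Ψmax k * G * (p * ∑ i, ‖y k - x (k + 1) i‖ +
              (1 - p) * ∑ i, ‖y (k - 1) - x k i‖))) /
        (2 * ∑ k ∈ Finset.Icc 2 K, Ψmin k) := by
  obtain rfl : D = objectiveGap f ystar y x := funext hD
  exact inexact_fc_aladin_convergence_general hp0.le hp1 hK (fun k hk => hΨmin k (by lia))
    fun k h2 hk => (hrec k h2 hk).trans_eq (add_assoc _ _ _)
end
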